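/- For every integer k ≥ 2 there exists a deterministic online algorithm A for bin packing with cardinality constraint k (namely the algorithm Thin-and-Fat) such that for every input list L, A(L) ≤ 2·OPT(L). That is, there is an online algorithm whose absolute competitive ratio is at most 2 for every k ≥ 2. -/

import Mathlib

/-!
The algorithm retires bins in pairs. Call an unretired bin *short* if it holds at most `k - 2`
items and *long* if it holds exactly `k - 1`. An item of size `x` is treated as follows.

* If it fits by size into a short bin, it goes there.
* Otherwise every short bin `H` satisfies `load H + x > 1`. If there are a short bin `H` and a
  long bin `T`, then either `x` fits into `T`, and `x` is put into `T` and the pair `H`, `T` is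
  retired; or `load T + x > 1`, and `x` is put into a new bin, which is retired together with `T`.
  Either way the retired pair has total load more than `1` and at least `k` items.
* Otherwise `x` opens a new bin, which stays unretired.

At every time the unretired bins either have pairwise load sums above `1`, or include at most one
short bin: a short bin is added to another one only when there are no long bins and `x` fits into
no short bin. In the first case all but one of the unretired bins have load above `1/2`, so the
number `B` of bins in use satisfies `B < 2 * (total size) + 1`. In the second case all but one of
them hold `k - 1 ≥ k / 2` items, so `k * B < 2 * (number of items) + k`. Since `OPT` is at least
the total size and at least the number of items divided by `k`, both give `B ≤ 2 * OPT`.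

`PackState.Good` is the invariant, `PackState.Good.exists_place` the step of the algorithm,
`PackState.Good.fresh_le` the final count, and `opt_bounds` the lower bounds on `OPT`. The
formal algorithm picks, by choice, any placement that preserves the invariant; the rules above show
that there is one.
-/

open scoped Classical
noncomputable section

/-- An input is a list of item sizes, each in (0,1]. -/
def ValidInput (L : List ℝ) : Prop := ∀ x ∈ L, 0 < x ∧ x ≤ 1

/-- A packing assigns a bin index to each item; it is feasible for cardinality
constraint `k` if every bin receives at most `k` items of total size at most 1. -/
def IsFeasible (k : ℕ) (L : List ℝ) (f : Fin L.length → ℕ) : Prop :=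
  ∀ b : ℕ,
    (Finset.univ.filter (fun i => f i = b)).card ≤ k ∧
    ∑ i ∈ Finset.univ.filter (fun i => f i = b), L.get i ≤ 1

/-- The number of bins used by a packing. -/
def binsUsed (L : List ℝ) (f : Fin L.length → ℕ) : ℕ :=
  (Finset.univ.image f).card

/-- The optimal (minimum) number of bins in a feasible packing of `L`. -/
def OPT (k : ℕ) (L : List ℝ) : ℕ :=
  sInf {n | ∃ f : Fin L.length → ℕ, IsFeasible k L f ∧ binsUsed L f = n}

/-- A deterministic online algorithm is a strategy: given the items seen so far
(ending with the item to be packed), it returns the bin index for that item. -/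
def onlinePacking (A : List ℝ → ℕ) (L : List ℝ) : Fin L.length → ℕ :=
  fun i => A (L.take (i.1 + 1))

/-- The strategy `A` is a valid online algorithm for cardinality constraint `k`
if on every valid input the induced packing is feasible. -/
def OnlineValid (k : ℕ) (A : List ℝ → ℕ) : Prop :=
  ∀ L : List ℝ, ValidInput L → IsFeasible k L (onlinePacking A L)

/-- The number of bins used by online algorithm `A` on input `L`. -/
def onlineBins (A : List ℝ → ℕ) (L : List ℝ) : ℕ :=
  binsUsed L (onlinePacking A L)

/-- The state of First Fit: a list of open bins (in order of opening),
each recorded as (number of items, total size). `ffFind` returns the index of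
the first bin that can receive an item of size `x` (it has at most `k-1` items
and the item fits); if none, the index of a new bin. -/
def ffFind (k : ℕ) (x : ℝ) : List (ℕ × ℝ) → ℕ
  | [] => 0
  | b :: bs => if b.1 < k ∧ b.2 + x ≤ 1 then 0 else ffFind k x bs + 1

/-- Update the First Fit state after packing an item of size `x`. -/
def ffUpdate (k : ℕ) (x : ℝ) : List (ℕ × ℝ) → List (ℕ × ℝ)
  | [] => [(1, x)]
  | b :: bs =>
      if b.1 < k ∧ b.2 + x ≤ 1 then (b.1 + 1, b.2 + x) :: bs
      else b :: ffUpdate k x bs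

/-- The final state of First Fit with cardinality constraint `k` on input `L`. -/
def ffState (k : ℕ) (L : List ℝ) : List (ℕ × ℝ) :=
  L.foldl (fun bs x => ffUpdate k x bs) []

/-- The number of bins used by First Fit with cardinality constraint `k` on `L`. -/
def FF (k : ℕ) (L : List ℝ) : ℕ := (ffState k L).length

/-- The bin index into which First Fit packs the `i`-th item of `L`. -/
def ffAssign (k : ℕ) (L : List ℝ) (i : Fin L.length) : ℕ :=
  ffFind k (L.get i) (ffState k (L.take i.1))

/-- State of the online algorithm. Bins are numbered `0, 1, …, fresh - 1` in order of opening;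
`load` and `cnt` give the total size and the number of items of each bin, `opened` is the set of
bins that are not yet retired, and `size`, `num` are the total size and the number of all items seen. `last` is the bin of the latest item. -/
structure PackState where
  load : ℕ → ℝ
  cnt : ℕ → ℕ
  fresh : ℕ
  opened : Finset ℕ
  size : ℝ
  num : ℕ
  last : ℕ

/-- The state before the first item. -/
def PackState.init : PackState := ⟨fun _ => 0, fun _ => 0, 0, ∅, 0, 0, 0⟩

/-- Put an item of size `x` into bin `b`; afterwards the bins below `B` are in use and `O` is the
set of bins not retired. -/
def PackState.place (s : PackState) (x : ℝ) (b B : ℕ) (O : Finset ℕ) : PackState :=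
  ⟨Function.update s.load b (s.load b + x), Function.update s.cnt b (s.cnt b + 1), B, O,
    s.size + x, s.num + 1, b⟩

/-- The invariant of the algorithm. Since `fresh - opened.card` is the number of retired bins,
`size_bound` and `num_bound` say that the retired bins have average load at least `1/2` and
average cardinality at least `k/2`. The dichotomy `shape` is what makes one of the two averages
work for the bins that are not retired as well. -/
structure PackState.Good (k : ℕ) (s : PackState) : Prop where
  cnt_le : ∀ b, s.cnt b ≤ k
  load_le : ∀ b, s.load b ≤ 1
  cnt_fresh : ∀ b, s.fresh ≤ b → s.cnt b = 0
  load_fresh : ∀ b, s.fresh ≤ b → s.load b = 0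
  opened_lt : ∀ b ∈ s.opened, b < s.fresh
  opened_cnt : ∀ b ∈ s.opened, 0 < s.cnt b ∧ s.cnt b + 1 ≤ k
  opened_load : ∀ b ∈ s.opened, 0 < s.load b
  size_bound : (s.fresh : ℝ) + 2 * ∑ b ∈ s.opened, s.load b ≤ 2 * s.size + s.opened.card
  num_bound : k * s.fresh + 2 * ∑ b ∈ s.opened, s.cnt b ≤ 2 * s.num + k * s.opened.card
  shape : (∀ a ∈ s.opened, ∀ b ∈ s.opened, a ≠ b → 1 < s.load a + s.load b) ∨
    (∀ a ∈ s.opened, ∀ b ∈ s.opened, s.cnt a + 1 < k → s.cnt b + 1 < k → a = b)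

lemma PackState.good_init (k : ℕ) : PackState.init.Good k := by
  constructor <;> simp [PackState.init]

lemma sum_update_mem {M : Type*} [AddCommMonoid M] (O : Finset ℕ) (f : ℕ → M) (b : ℕ) (v : M)
    (hb : b ∈ O) :
    ∑ a ∈ O, Function.update f b (f b + v) a = ∑ a ∈ O, f a + v := by
  rw [Finset.sum_update_of_mem hb, ← Finset.add_sum_erase O f hb, Finset.sdiff_singleton_eq_erase]
  abel

lemma sum_update_notMem {M : Type*} [AddCommMonoid M] (O : Finset ℕ) (f : ℕ → M) (b : ℕ) (v : M)
    (hb : b ∉ O) :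
    ∑ a ∈ O, Function.update f b v a = ∑ a ∈ O, f a :=
  Finset.sum_update_of_notMem hb f v

/-- One step of the algorithm: every item can be placed so that the invariant survives. -/
lemma PackState.Good.exists_place {k : ℕ} (hk : 2 ≤ k) {s : PackState} (h : s.Good k) {x : ℝ}
    (hx0 : 0 < x) (hx1 : x ≤ 1) :
    ∃ p : ℕ × ℕ × Finset ℕ, p.1 < p.2.1 ∧ s.fresh ≤ p.2.1 ∧
      (s.place x p.1 p.2.1 p.2.2).Good k := by
  obtain ⟨h1, h2, h3, h4, h5, h6, h7, h8, h9, h10⟩ := h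
  by_cases c1 : ∃ b ∈ s.opened, s.cnt b + 1 < k ∧ s.load b + x ≤ 1
  · -- the item fits into an unretired bin and leaves it with at most `k - 1` items
    obtain ⟨b, hb, hbk, hbx⟩ := c1
    have hbf := h5 b hb
    refine ⟨(b, s.fresh, s.opened), hbf, le_rfl, ?_⟩
    have hle : ∀ a, s.load a ≤ Function.update s.load b (s.load b + x) a := by
      intro a; rw [Function.update_apply]; split_ifs with e
      · subst e; linarith
      · exact le_rfl
    have hcle : ∀ a, s.cnt a ≤ Function.update s.cnt b (s.cnt b + 1) a := by
      intro a; rw [Function.update_apply]; split_ifs with e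
      · subst e; omega
      · exact le_rfl
    constructor <;> simp only [PackState.place]
    · intro a; rw [Function.update_apply]; split_ifs
      · omega
      · exact h1 a
    · intro a; rw [Function.update_apply]; split_ifs
      · exact hbx
      · exact h2 a
    · intro a ha; rw [Function.update_of_ne (by omega)]; exact h3 a ha
    · intro a ha; rw [Function.update_of_ne (by omega)]; exact h4 a ha
    · exact h5
    · intro a ha
      have := h6 a ha
      rw [Function.update_apply]; split_ifs
      · omega
      · exact this
    · intro a ha; exact (h7 a ha).trans_le (hle a)
    · rw [sum_update_mem _ _ _ _ hb]; linarith
    · rw [sum_update_mem _ _ _ _ hb]; omega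
    · rcases h10 with g | g
      · left; intro a ha c hc hac
        have := g a ha c hc hac
        linarith [hle a, hle c]
      · right; intro a ha c hc h' h''
        have := hcle a
        have := hcle c
        exact g a ha c hc (by omega) (by omega)
  · push Not at c1
    by_cases c2 : ∃ H ∈ s.opened, ∃ T ∈ s.opened, s.cnt H + 1 < k ∧ s.cnt T + 1 = k
    · obtain ⟨H, hH, T, hT, hHk, hTk⟩ := c2
      have hHx := c1 H hH hHk
      have hHT : T ≠ H := by rintro rfl; omega
      have hTf := h5 T hT
      have cardT := Finset.card_erase_add_one hT
      have sumT := Finset.add_sum_erase _ s.load hT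
      have csumT := Finset.add_sum_erase _ s.cnt hT
      by_cases c3 : s.load T + x ≤ 1
      · -- the item completes `T`, and the pair `H`, `T` is retired
        have hH' : H ∈ s.opened.erase T := Finset.mem_erase.2 ⟨hHT.symm, hH⟩
        have cardH := Finset.card_erase_add_one hH'
        have sumH := Finset.add_sum_erase _ s.load hH'
        have csumH := Finset.add_sum_erase _ s.cnt hH'
        have hcH := (h6 H hH).1
        set O := (s.opened.erase T).erase H with hO
        have hTO : T ∉ O := by simp [hO]
        have hsub : ∀ a ∈ O, a ∈ s.opened ∧ a ≠ T := by
          intro a ha; simp only [hO, Finset.mem_erase] at ha; exact ⟨ha.2.2, ha.2.1⟩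
        refine ⟨(T, s.fresh, O), hTf, le_rfl, ?_⟩
        constructor <;> simp only [PackState.place]
        · intro a; rw [Function.update_apply]; split_ifs
          · omega
          · exact h1 a
        · intro a; rw [Function.update_apply]; split_ifs
          · exact c3
          · exact h2 a
        · intro a ha; rw [Function.update_of_ne (by omega)]; exact h3 a ha
        · intro a ha; rw [Function.update_of_ne (by omega)]; exact h4 a ha
        · intro a ha; exact h5 a (hsub a ha).1
        · intro a ha; rw [Function.update_of_ne (hsub a ha).2]; exact h6 a (hsub a ha).1
        · intro a ha; rw [Function.update_of_ne (hsub a ha).2]; exact h7 a (hsub a ha).1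
        · rw [sum_update_notMem _ _ _ _ hTO]
          have e : (s.opened.card : ℝ) = O.card + 2 := by
            rw [← cardT, ← cardH]; push_cast; ring
          linarith [h7 T hT]
        · rw [sum_update_notMem _ _ _ _ hTO]
          have e : k * s.opened.card = k * O.card + 2 * k := by
            rw [← cardT, ← cardH]; ring
          omega
        · rcases h10 with g | g
          · left; intro a ha c hc hac
            rw [Function.update_of_ne (hsub a ha).2, Function.update_of_ne (hsub c hc).2]
            exact g a (hsub a ha).1 c (hsub c hc).1 hac
          · right; intro a ha c hc
            rw [Function.update_of_ne (hsub a ha).2, Function.update_of_ne (hsub c hc).2]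
            exact g a (hsub a ha).1 c (hsub c hc).1
      · -- the item gets a new bin, which is retired together with `T`
        push Not at c3
        set O := s.opened.erase T with hO
        have hsub : ∀ a ∈ O, a ∈ s.opened ∧ a ≠ s.fresh := by
          intro a ha
          have ha' := Finset.mem_of_mem_erase ha
          exact ⟨ha', (h5 a ha').ne⟩
        have hBO : s.fresh ∉ O := fun hm => (hsub _ hm).2 rfl
        have l0 := h4 s.fresh le_rfl
        have n0 := h3 s.fresh le_rfl
        refine ⟨(s.fresh, s.fresh + 1, O), Nat.lt_succ_self _, Nat.le_succ _, ?_⟩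
        constructor <;> simp only [PackState.place]
        · intro a; rw [Function.update_apply]; split_ifs
          · omega
          · exact h1 a
        · intro a; rw [Function.update_apply]; split_ifs
          · linarith
          · exact h2 a
        · intro a ha; rw [Function.update_of_ne (by omega)]; exact h3 a (by omega)
        · intro a ha; rw [Function.update_of_ne (by omega)]; exact h4 a (by omega)
        · intro a ha; exact (h5 a (hsub a ha).1).trans (Nat.lt_succ_self _)
        · intro a ha; rw [Function.update_of_ne (hsub a ha).2]; exact h6 a (hsub a ha).1
        · intro a ha; rw [Function.update_of_ne (hsub a ha).2]; exact h7 a (hsub a ha).1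
        · rw [sum_update_notMem _ _ _ _ hBO]
          have e : (s.opened.card : ℝ) = O.card + 1 := by
            rw [← cardT]; push_cast; ring
          push_cast
          linarith
        · rw [sum_update_notMem _ _ _ _ hBO]
          have e : k * s.opened.card = k * O.card + k := by
            rw [← cardT]; ring
          have e' : k * (s.fresh + 1) = k * s.fresh + k := by ring
          omega
        · rcases h10 with g | g
          · left; intro a ha c hc hac
            rw [Function.update_of_ne (hsub a ha).2, Function.update_of_ne (hsub c hc).2]
            exact g a (hsub a ha).1 c (hsub c hc).1 hac
          · right; intro a ha c hc
            rw [Function.update_of_ne (hsub a ha).2, Function.update_of_ne (hsub c hc).2]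
            exact g a (hsub a ha).1 c (hsub c hc).1
    · -- the item gets a new bin, which stays unretired
      push Not at c2
      have l0 := h4 s.fresh le_rfl
      have n0 := h3 s.fresh le_rfl
      have hne : ∀ a ∈ s.opened, a ≠ s.fresh := fun a ha => (h5 a ha).ne
      have hBO : s.fresh ∉ s.opened := fun hm => hne _ hm rfl
      refine ⟨(s.fresh, s.fresh + 1, insert s.fresh s.opened), Nat.lt_succ_self _,
        Nat.le_succ _, ?_⟩
      constructor <;> simp only [PackState.place]
      · intro a; rw [Function.update_apply]; split_ifs
        · omega
        · exact h1 a
      · intro a; rw [Function.update_apply]; split_ifs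
        · linarith
        · exact h2 a
      · intro a ha; rw [Function.update_of_ne (by omega)]; exact h3 a (by omega)
      · intro a ha; rw [Function.update_of_ne (by omega)]; exact h4 a (by omega)
      · intro a ha
        rcases Finset.mem_insert.1 ha with rfl | ha
        · exact Nat.lt_succ_self _
        · exact (h5 a ha).trans (Nat.lt_succ_self _)
      · intro a ha
        rcases Finset.mem_insert.1 ha with rfl | ha
        · rw [Function.update_self]; omega
        · rw [Function.update_of_ne (hne a ha)]; exact h6 a ha
      · intro a ha
        rcases Finset.mem_insert.1 ha with rfl | ha
        · rw [Function.update_self]; linarith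
        · rw [Function.update_of_ne (hne a ha)]; exact h7 a ha
      · rw [Finset.sum_insert hBO, sum_update_notMem _ _ _ _ hBO, Function.update_self,
          Finset.card_insert_of_notMem hBO]
        push_cast; linarith
      · rw [Finset.sum_insert hBO, sum_update_notMem _ _ _ _ hBO, Function.update_self,
          Finset.card_insert_of_notMem hBO, Nat.mul_add k, Nat.mul_add k]
        omega
      · by_cases c4 : ∃ H ∈ s.opened, s.cnt H + 1 < k
        · left
          obtain ⟨H, hH, hHk⟩ := c4
          have hall : ∀ a ∈ s.opened, s.cnt a + 1 < k := by
            intro a ha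
            have := c2 H hH a ha hHk
            have := (h6 a ha).2
            omega
          have hold : ∀ a ∈ s.opened, ∀ b ∈ s.opened, a ≠ b → 1 < s.load a + s.load b := by
            rcases h10 with g | g
            · exact g
            · intro a ha b hb hab
              exact absurd (g a ha b hb (hall a ha) (hall b hb)) hab
          intro a ha b hb hab
          rcases Finset.mem_insert.1 ha with rfl | ha <;>
            rcases Finset.mem_insert.1 hb with rfl | hb
          · exact absurd rfl hab
          · rw [Function.update_self, Function.update_of_ne (hne b hb)]
            linarith [c1 b hb (hall b hb)]
          · rw [Function.update_self, Function.update_of_ne (hne a ha)]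
            linarith [c1 a ha (hall a ha)]
          · rw [Function.update_of_ne (hne a ha), Function.update_of_ne (hne b hb)]
            exact hold a ha b hb hab
        · right
          push Not at c4
          have key : ∀ a ∈ insert s.fresh s.opened,
              Function.update s.cnt s.fresh (s.cnt s.fresh + 1) a + 1 < k → a = s.fresh := by
            intro a ha hak
            rcases Finset.mem_insert.1 ha with rfl | ha
            · rfl
            · rw [Function.update_of_ne (hne a ha)] at hak
              exact absurd hak (not_lt.2 (c4 a ha))
          intro a ha b hb hak hbk
          rw [key a ha hak, key b hb hbk]

/-- If `m` is at least the total size and `k * m` at least the number of items, then at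
most `2 * m` bins are in use. -/
lemma PackState.Good.fresh_le {k : ℕ} (hk : 2 ≤ k) {s : PackState} (h : s.Good k) {m : ℕ}
    (hS : s.size ≤ m) (hn : s.num ≤ k * m) : s.fresh ≤ 2 * m := by
  rcases h.shape with g | g
  · have key : (s.opened.card : ℝ) < 2 * ∑ b ∈ s.opened, s.load b + 1 := by
      by_cases c : ∃ a ∈ s.opened, s.load a ≤ 1 / 2
      · obtain ⟨a, ha, hal⟩ := c
        have e := Finset.add_sum_erase _ s.load ha
        have ce := Finset.card_erase_add_one ha
        have := Finset.card_nsmul_le_sum (s.opened.erase a) s.load (1 / 2) (by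
          intro b hb
          have hb' := Finset.mem_erase.1 hb
          linarith [g a ha b hb'.2 (Ne.symm hb'.1)])
        rw [nsmul_eq_mul] at this
        rw [← e, ← ce]
        push_cast
        linarith [h.opened_load a ha]
      · push Not at c
        have := Finset.card_nsmul_le_sum s.opened s.load (1 / 2) (fun b hb => (c b hb).le)
        rw [nsmul_eq_mul] at this
        linarith
    have := h.size_bound
    have : (s.fresh : ℝ) < 2 * m + 1 := by linarith
    have : s.fresh < 2 * m + 1 := by exact_mod_cast this
    omega
  · have key : k * s.opened.card < 2 * ∑ b ∈ s.opened, s.cnt b + k := by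
      by_cases c : ∃ a ∈ s.opened, s.cnt a + 1 < k
      · obtain ⟨a, ha, hal⟩ := c
        have e := Finset.add_sum_erase _ s.cnt ha
        have ce := Finset.card_erase_add_one ha
        have := Finset.card_nsmul_le_sum (s.opened.erase a) (fun b => 2 * s.cnt b) k (by
          intro b hb
          have hb' := Finset.mem_erase.1 hb
          by_contra hlt
          exact hb'.1 (g b hb'.2 a ha (by omega) hal))
        rw [smul_eq_mul, ← Finset.mul_sum, mul_comm] at this
        rw [← e, ← ce, Nat.mul_add]
        have := (h.opened_cnt a ha).1
        omega
      · push Not at c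
        have := Finset.card_nsmul_le_sum s.opened (fun b => 2 * s.cnt b) k (by
          intro b hb
          have := c b hb
          omega)
        rw [smul_eq_mul, ← Finset.mul_sum, mul_comm] at this
        omega
    have := h.num_bound
    have : k * s.fresh < k * (2 * m + 1) := by
      have e : k * (2 * m + 1) = 2 * (k * m) + k := by ring
      omega
    have := lt_of_mul_lt_mul_left this (Nat.zero_le k)
    omega

/-- Process one item, choosing a placement as in `PackState.Good.exists_place`. An item without
such a placement is ignored. -/
def PackState.step (k : ℕ) (s : PackState) (x : ℝ) : PackState :=
  if h : ∃ p : ℕ × ℕ × Finset ℕ, p.1 < p.2.1 ∧ s.fresh ≤ p.2.1 ∧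
      (s.place x p.1 p.2.1 p.2.2).Good k then
    s.place x h.choose.1 h.choose.2.1 h.choose.2.2
  else s

/-- The state after processing a list of items. -/
def packRun (k : ℕ) (L : List ℝ) : PackState := L.foldl (PackState.step k) PackState.init

lemma packRun_append (k : ℕ) (L : List ℝ) (x : ℝ) :
    packRun k (L ++ [x]) = (packRun k L).step k x := by
  simp [packRun]

/-- The sum of `φ` over the items that strategy `A` packs into bin `b` grows only when `A`
chooses `b`. Used with `φ = id` for the load and `φ = 1` for the cardinality. -/
lemma fiber_sum_append {M : Type*} [AddCommMonoid M] (φ : ℝ → M) (A : List ℝ → ℕ) (L : List ℝ)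
    (x : ℝ) (b : ℕ) :
    ∑ i ∈ Finset.univ.filter (fun i => onlinePacking A (L ++ [x]) i = b), φ ((L ++ [x]).get i) =
      ∑ i ∈ Finset.univ.filter (fun i => onlinePacking A L i = b), φ (L.get i) +
        if A (L ++ [x]) = b then φ x else 0 := by
  have key : ∀ L : List ℝ,
      ∑ i ∈ Finset.univ.filter (fun i => onlinePacking A L i = b), φ (L.get i) =
      ∑ i ∈ Finset.range L.length, if A (L.take (i + 1)) = b then φ (L.getD i 0) else 0 := by
    intro L
    rw [Finset.sum_filter, ← Fin.sum_univ_eq_sum_range]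
    refine Finset.sum_congr rfl fun i _ => ?_
    simp only [onlinePacking, List.get_eq_getElem, List.getD_eq_getElem _ _ i.2]
    congr
  rw [key, key, List.length_append, List.length_singleton, Finset.sum_range_succ]
  congr 1
  · refine Finset.sum_congr rfl fun i hi => ?_
    have hi := Finset.mem_range.1 hi
    rw [List.take_append_of_le_length (by omega), List.getD_append _ _ _ _ hi]
  · rw [List.take_of_length_le (by simp), List.getD_append_right _ _ _ _ le_rfl]
    simp

/-- The states of the run satisfy the invariant and record the packing correctly. -/
lemma packRun_spec {k : ℕ} (hk : 2 ≤ k) (L : List ℝ) (hL : ValidInput L) :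
    (packRun k L).Good k ∧ (packRun k L).size = L.sum ∧ (packRun k L).num = L.length ∧
    (∀ b, ∑ i ∈ Finset.univ.filter
        (fun i => onlinePacking (fun L => (packRun k L).last) L i = b), L.get i =
          (packRun k L).load b) ∧
    (∀ b, (Finset.univ.filter
        (fun i => onlinePacking (fun L => (packRun k L).last) L i = b)).card =
          (packRun k L).cnt b) ∧
    ∀ i, onlinePacking (fun L => (packRun k L).last) L i < (packRun k L).fresh := by
  induction L using List.reverseRecOn with
  | nil =>
    refine ⟨PackState.good_init k, rfl, rfl, fun b => rfl, fun b => rfl, fun i => i.elim0⟩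
  | append_singleton L x ih =>
    obtain ⟨hG, hS, hN, hl, hc, hf⟩ := ih fun y hy => hL y (by simp [hy])
    obtain ⟨hx0, hx1⟩ := hL x (by simp)
    have hex := hG.exists_place hk hx0 hx1
    have hrun : packRun k (L ++ [x]) = (packRun k L).place x hex.choose.1 hex.choose.2.1
        hex.choose.2.2 := by
      rw [packRun_append, PackState.step, dif_pos hex]
    obtain ⟨p1, p2, p3⟩ := hex.choose_spec
    generalize hex.choose = p at *
    obtain ⟨b₀, B, O⟩ := p
    simp only at p1 p2 p3 hrun
    refine ⟨hrun ▸ p3, ?_, ?_, fun b => ?_, fun b => ?_, fun i => ?_⟩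
    · rw [hrun]; simp [PackState.place, hS]
    · rw [hrun]; simp [PackState.place, hN]
    · have := fiber_sum_append (fun y => y) (fun L => (packRun k L).last) L x b
      rw [this, hl b, hrun]
      simp only [PackState.place, Function.update_apply]
      by_cases e : b₀ = b
      · simp [e]
      · simp [e, Ne.symm e]
    · have := fiber_sum_append (fun _ => 1) (fun L => (packRun k L).last) L x b
      simp only [← Finset.card_eq_sum_ones] at this
      rw [this, hc b, hrun]
      simp only [PackState.place, Function.update_apply]
      by_cases e : b₀ = b
      · simp [e]
      · simp [e, Ne.symm e]
    · by_cases hi : i.1 < L.length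
      · have := hf ⟨i.1, hi⟩
        simp only [onlinePacking] at this ⊢
        rw [List.take_append_of_le_length (by omega)]
        rw [hrun]
        exact this.trans_le p2
      · have : (L ++ [x]).length ≤ i.1 + 1 := by simp; omega
        simp only [onlinePacking]
        rw [List.take_of_length_le this, hrun]
        exact p1

/-- The two lower bounds on the optimum that the analysis uses. -/
lemma opt_bounds {k : ℕ} (hk : 2 ≤ k) (L : List ℝ) (hL : ValidInput L) :
    L.sum ≤ OPT k L ∧ L.length ≤ k * OPT k L := by
  have hne : {n | ∃ f : Fin L.length → ℕ, IsFeasible k L f ∧ binsUsed L f = n}.Nonempty := by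
    -- one bin per item is feasible
    refine ⟨_, fun i => i.1, fun b => ?_, rfl⟩
    by_cases hb : b < L.length
    · have e : Finset.univ.filter (fun i : Fin L.length => i.1 = b) = {⟨b, hb⟩} := by
        ext i; simp [Fin.ext_iff]
      rw [e]
      simp only [Finset.card_singleton, Finset.sum_singleton]
      exact ⟨by omega, (hL _ (List.get_mem L _)).2⟩
    · have e : Finset.univ.filter (fun i : Fin L.length => i.1 = b) = ∅ := by
        ext i; simp; omega
      rw [e]; simp
  obtain ⟨f, hf, hm⟩ := Nat.sInf_mem hne
  change binsUsed L f = OPT k L at hm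
  rw [← hm]
  have hmaps : ∀ i ∈ (Finset.univ : Finset (Fin L.length)), f i ∈ Finset.univ.image f :=
    fun i _ => Finset.mem_image_of_mem f (Finset.mem_univ i)
  constructor
  · have e : L.sum = ∑ i, L.get i := by
      rw [← List.sum_ofFn, List.ofFn_get]
    rw [e, ← Finset.sum_fiberwise_of_maps_to hmaps]
    have := Finset.sum_le_card_nsmul (Finset.univ.image f)
      (fun b => ∑ i ∈ Finset.univ.filter (fun i => f i = b), L.get i) 1 (fun b _ => (hf b).2)
    simpa [binsUsed] using this
  · have e := Finset.card_eq_sum_card_fiberwise hmaps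
    have := Finset.sum_le_card_nsmul (Finset.univ.image f)
      (fun b => (Finset.univ.filter (fun i => f i = b)).card) k (fun b _ => (hf b).1)
    rw [← e] at this
    simpa [binsUsed, mul_comm] using this

/-- For every k ≥ 2 there is a deterministic online algorithm (such as
Thin-and-Fat) whose absolute competitive ratio is at most 2: for every input `L`,
it uses at most 2·OPT(L) bins. -/
theorem exists_two_competitive_online (k : ℕ) (hk : 2 ≤ k) :
    ∃ A : List ℝ → ℕ, OnlineValid k A ∧
      ∀ L : List ℝ, ValidInput L → (onlineBins A L : ℝ) ≤ 2 * (OPT k L : ℝ) := by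
  refine ⟨fun L => (packRun k L).last, fun L hL b => ?_, fun L hL => ?_⟩
  · obtain ⟨hG, -, -, hl, hc, -⟩ := packRun_spec hk L hL
    rw [hl b, hc b]
    exact ⟨hG.cnt_le b, hG.load_le b⟩
  · obtain ⟨hG, hS, hN, -, -, hf⟩ := packRun_spec hk L hL
    obtain ⟨o1, o2⟩ := opt_bounds hk L hL
    have h1 : (packRun k L).fresh ≤ 2 * OPT k L := hG.fresh_le hk (hS ▸ o1) (hN ▸ o2)
    have h2 : onlineBins (fun L => (packRun k L).last) L ≤ (packRun k L).fresh := by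
      rw [onlineBins, binsUsed, ← Finset.card_range (packRun k L).fresh]
      refine Finset.card_le_card fun b hb => ?_
      obtain ⟨i, -, rfl⟩ := Finset.mem_image.1 hb
      exact Finset.mem_range.2 (hf i)
    exact_mod_cast h2.trans h1
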